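/- Let d ≥ 1 be a natural number, let a be a real number with 0 < a ≤ 1/d², set b = 2 + a, let σ ≥ 0, and let p, q ∈ ℝ[X] be polynomials of degree at most d such that |p(x) − q(x)| ≤ σ for all x ∈ [a,b]. Then |p'(0) − q'(0)| ≤ e · σ / a, where e = exp(1). -/

import Mathlib

/-!
Among polynomials of degree at most `n` bounded by `σ` on `[-1, 1]`, the multiple `σ Tₙ` of the
Chebyshev polynomial has the largest derivatives at every point `x ≥ 1`. The recurrence
`(2k + 1) Tₙ⁽ᵏ⁺¹⁾(1) = (n² - k²) Tₙ⁽ᵏ⁾(1)` shows that each further derivative of `Tₙ` at `1` costs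
at most a factor `n²`, so Taylor expansion at `1` gives `Tₙ⁽ᵏ⁾(x) ≤ Tₙ⁽ᵏ⁾(1) exp (n² (x - 1))`. The
reflection `y ↦ 1 + a - y` carries `[-1, 1]` to `[a, 2 + a]` and `1 + a` to `0`, so that
`|(p - q)'(0)| ≤ σ Tₙ'(1 + a) ≤ σ n² exp (n² a)`, which is at most `σ e / a` when `n² a ≤ 1`.
-/

section IterateDerivative

open Polynomial Nat

theorem iterate_derivative_comp_C_mul_X_add_C {R : Type*} [CommSemiring R] (p : R[X]) (m c : R)
    (k : ℕ) :
    derivative^[k] (p.comp (C m * X + C c)) =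
      C (m ^ k) * (derivative^[k] p).comp (C m * X + C c) := by
  induction k with
  | zero => simp
  | succ k ih =>
    simp only [Function.iterate_succ_apply', ih, derivative_C_mul, derivative_comp, derivative_add,
      derivative_X, derivative_C, mul_one, add_zero, pow_succ, C_mul, mul_assoc]

theorem eval_eq_sum_iterate_derivative {K : Type*} [Field K] [CharZero K] (p : K[X]) (c x : K) :
    p.eval x = ∑ j ∈ Finset.range (p.natDegree + 1),
      (derivative^[j] p).eval c * ((x - c) ^ j / j !) := by
  have taylor_coeff_eq (j : ℕ) : (taylor c p).coeff j = (derivative^[j] p).eval c / j ! := by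
    rw [taylor_coeff, eq_div_iff (Nat.cast_ne_zero.mpr j.factorial_ne_zero), mul_comm,
      ← factorial_smul_hasseDeriv]
    simp
  calc p.eval x = (taylor c p).eval (x - c) := by rw [taylor_eval_sub]
    _ = ∑ j ∈ Finset.range (p.natDegree + 1), (taylor c p).coeff j * (x - c) ^ j := by
      rw [eval_eq_sum_range, natDegree_taylor]
    _ = _ := Finset.sum_congr rfl fun j _ => by rw [taylor_coeff_eq]; ring

theorem eval_le_mul_exp_of_forall_iterate_derivative_le {p : ℝ[X]} {A M c x : ℝ} (hA : 0 ≤ A)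
    (hM : 0 ≤ M) (hx : c ≤ x) (hp : ∀ j, (derivative^[j] p).eval c ≤ A * M ^ j) :
    p.eval x ≤ A * Real.exp (M * (x - c)) := by
  have hxc : 0 ≤ x - c := sub_nonneg.mpr hx
  calc p.eval x = ∑ j ∈ Finset.range (p.natDegree + 1),
          (derivative^[j] p).eval c * ((x - c) ^ j / j !) := eval_eq_sum_iterate_derivative p c x
    _ ≤ ∑ j ∈ Finset.range (p.natDegree + 1), A * M ^ j * ((x - c) ^ j / j !) :=
      Finset.sum_le_sum fun j _ => mul_le_mul_of_nonneg_right (hp j) (by positivity)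
    _ = A * ∑ j ∈ Finset.range (p.natDegree + 1), (M * (x - c)) ^ j / j ! := by
      rw [Finset.mul_sum]
      exact Finset.sum_congr rfl fun j _ => by rw [mul_pow]; ring
    _ ≤ A * Real.exp (M * (x - c)) := by
      gcongr
      exact Real.sum_le_exp_of_nonneg (mul_nonneg hM hxc) _

end IterateDerivative

section Chebyshev

open Polynomial Chebyshev

theorem iterate_derivative_T_real_eval_one_nonneg (n : ℤ) (k : ℕ) :
    0 ≤ (derivative^[k] (T ℝ n)).eval 1 :=
  (abs_nonneg _).trans (abs_iterate_derivative_T_real_le n k abs_one.le)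

theorem iterate_derivative_succ_T_real_eval_one_le (n : ℤ) (k : ℕ) :
    (derivative^[k + 1] (T ℝ n)).eval 1 ≤ (derivative^[k] (T ℝ n)).eval 1 * (n : ℝ) ^ 2 := by
  have nonneg := iterate_derivative_T_real_eval_one_nonneg n
  calc (derivative^[k + 1] (T ℝ n)).eval 1
      ≤ (2 * k + 1) * (derivative^[k + 1] (T ℝ n)).eval 1 :=
        le_mul_of_one_le_left (nonneg _) (by simp)
    _ = ((n : ℝ) ^ 2 - k ^ 2) * (derivative^[k] (T ℝ n)).eval 1 :=
        iterate_derivative_T_eval_one_recurrence n k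
    _ ≤ (n : ℝ) ^ 2 * (derivative^[k] (T ℝ n)).eval 1 :=
        mul_le_mul_of_nonneg_right (sub_le_self _ (by positivity)) (nonneg k)
    _ = (derivative^[k] (T ℝ n)).eval 1 * (n : ℝ) ^ 2 := mul_comm _ _

theorem iterate_derivative_T_real_eval_le_mul_exp (n : ℤ) (k : ℕ) {x : ℝ} (hx : 1 ≤ x) :
    (derivative^[k] (T ℝ n)).eval x ≤
      (derivative^[k] (T ℝ n)).eval 1 * Real.exp ((n : ℝ) ^ 2 * (x - 1)) := by
  refine eval_le_mul_exp_of_forall_iterate_derivative_le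
    (iterate_derivative_T_real_eval_one_nonneg n k) (by positivity) hx fun j => ?_
  rw [← Function.iterate_add_apply]
  induction j with
  | zero => simp
  | succ j ih =>
    calc (derivative^[j + 1 + k] (T ℝ n)).eval 1
        ≤ (derivative^[j + k] (T ℝ n)).eval 1 * (n : ℝ) ^ 2 := by
          rw [Nat.add_right_comm]
          exact iterate_derivative_succ_T_real_eval_one_le n (j + k)
      _ ≤ (derivative^[k] (T ℝ n)).eval 1 * ((n : ℝ) ^ 2) ^ j * (n : ℝ) ^ 2 := by gcongr
      _ = (derivative^[k] (T ℝ n)).eval 1 * ((n : ℝ) ^ 2) ^ (j + 1) := by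
          rw [mul_assoc, ← pow_succ]

theorem eval_iterate_derivative_le_mul_of_forall_abs_le {n : ℕ} {P : ℝ[X]} {σ : ℝ} {k : ℕ} {x : ℝ}
    (hx : 1 ≤ x) (hdeg : P.natDegree ≤ n) (hP : ∀ y ∈ Set.Icc (-1) 1, |P.eval y| ≤ σ) :
    (derivative^[k] P).eval x ≤ σ * (derivative^[k] (T ℝ n)).eval x := by
  have hσ : 0 ≤ σ := (abs_nonneg _).trans (hP 0 (by simp))
  obtain rfl | hσ := hσ.eq_or_lt
  · have P_eq_zero : P = 0 := eq_zero_of_infinite_isRoot P <|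
      (Set.Icc_infinite (by norm_num)).mono fun y hy => abs_nonpos_iff.mp (hP y hy)
    simp [P_eq_zero]
  · have hdeg' : (C σ⁻¹ * P).degree ≤ n :=
      degree_le_of_natDegree_le ((natDegree_C_mul_le _ _).trans hdeg)
    have hP' (y : ℝ) (hy : y ∈ Set.Icc (-1) 1) : |(C σ⁻¹ * P).eval y| ≤ 1 := by
      rw [eval_C_mul, abs_mul, abs_of_pos (inv_pos.mpr hσ), inv_mul_le_iff₀ hσ, mul_one]
      exact hP y hy
    have key := eval_iterate_derivative_le_of_forall_abs_le_one (k := k) hx hdeg' hP'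
    rwa [iterate_derivative_C_mul, eval_C_mul, inv_mul_le_iff₀ hσ] at key

theorem abs_eval_iterate_derivative_le_mul_of_forall_abs_le {n : ℕ} {P : ℝ[X]} {σ : ℝ} {k : ℕ}
    {x : ℝ} (hx : 1 ≤ x) (hdeg : P.natDegree ≤ n) (hP : ∀ y ∈ Set.Icc (-1) 1, |P.eval y| ≤ σ) :
    |(derivative^[k] P).eval x| ≤ σ * (derivative^[k] (T ℝ n)).eval x := by
  have neg_le := eval_iterate_derivative_le_mul_of_forall_abs_le (n := n) (P := -P) (σ := σ)
    (k := k) hx (by rwa [natDegree_neg]) (by simpa only [eval_neg, abs_neg] using hP)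
  rw [iterate_derivative_neg, eval_neg] at neg_le
  exact abs_le'.mpr ⟨eval_iterate_derivative_le_mul_of_forall_abs_le hx hdeg hP, neg_le⟩

theorem abs_pow_mul_abs_eval_iterate_derivative_le_of_forall_abs_le {n : ℕ} {P : ℝ[X]}
    {m c σ : ℝ} {k : ℕ} {x : ℝ} (hx : 1 ≤ x) (hdeg : P.natDegree ≤ n)
    (hP : ∀ y ∈ Set.Icc (-1) 1, |P.eval (m * y + c)| ≤ σ) :
    |m| ^ k * |(derivative^[k] P).eval (m * x + c)| ≤ σ * (derivative^[k] (T ℝ n)).eval x := by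
  have hdeg' : (P.comp (C m * X + C c)).natDegree ≤ n :=
    calc (P.comp (C m * X + C c)).natDegree ≤ P.natDegree * (C m * X + C c).natDegree :=
          natDegree_comp_le
      _ ≤ P.natDegree * 1 := by gcongr; exact natDegree_linear_le
      _ ≤ n := by rwa [mul_one]
  have key := abs_eval_iterate_derivative_le_mul_of_forall_abs_le (σ := σ) (k := k) hx hdeg'
    fun y hy => by simpa using hP y hy
  simpa [iterate_derivative_comp_C_mul_X_add_C, abs_mul] using key

end Chebyshev

/-- Two degree-`d` polynomials uniformly `σ`-close on `[a, 2+a]` with `a ≤ d⁻²`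
have derivatives at `0` differing by at most `e·σ/a`. -/
theorem derivative_close_of_uniformly_close (d : ℕ) (hd : 1 ≤ d)
    (a : ℝ) (ha : 0 < a) (ha' : a ≤ 1 / (d : ℝ) ^ 2) (b : ℝ) (hb : b = 2 + a)
    (σ : ℝ) (hσ : 0 ≤ σ) (p q : Polynomial ℝ)
    (hp : p.natDegree ≤ d) (hq : q.natDegree ≤ d)
    (hclose : ∀ x ∈ Set.Icc a b, |p.eval x - q.eval x| ≤ σ) :
    |p.derivative.eval 0 - q.derivative.eval 0| ≤ Real.exp 1 * σ / a := by
  have deriv_T_le : (Polynomial.Chebyshev.T ℝ d).derivative.eval (1 + a) ≤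
      (d : ℝ) ^ 2 * Real.exp ((d : ℝ) ^ 2 * a) := by
    simpa [Polynomial.Chebyshev.derivative_T_eval_one] using
      iterate_derivative_T_real_eval_le_mul_exp d 1 (le_add_of_nonneg_right ha.le)
  have deriv_sub_le : |p.derivative.eval 0 - q.derivative.eval 0| ≤
      σ * (Polynomial.Chebyshev.T ℝ d).derivative.eval (1 + a) := by
    simpa using abs_pow_mul_abs_eval_iterate_derivative_le_of_forall_abs_le (P := p - q)
      (m := -1) (c := 1 + a) (σ := σ) (k := 1) (le_add_of_nonneg_right ha.le)
      ((Polynomial.natDegree_sub_le p q).trans (max_le hp hq)) fun y hy => by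
        rw [Polynomial.eval_sub]
        exact hclose _ ⟨by linarith [hy.2], by linarith [hy.1]⟩
  have sq_le_inv : (d : ℝ) ^ 2 ≤ a⁻¹ := by
    rw [le_inv_comm₀ (by positivity) ha, ← one_div]
    exact ha'
  calc |p.derivative.eval 0 - q.derivative.eval 0|
      ≤ σ * ((d : ℝ) ^ 2 * Real.exp ((d : ℝ) ^ 2 * a)) := by grw [deriv_sub_le, deriv_T_le]
    _ ≤ σ * (a⁻¹ * Real.exp (a⁻¹ * a)) := by gcongr
    _ = Real.exp 1 * σ / a := by rw [inv_mul_cancel₀ ha.ne']; ring
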